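/- Let p be a prime with p ≡ 1 (mod 3), and write 4p = L² + 27M² with integers L, M and L ≡ 1 (mod 3) (such L is unique). Then L = 2p − 1 − 3·V_p(x² + 1/x) and L = 2p − 1 − 3·V_p(x + 1/x²). -/

import Mathlib

/-!
Two distinct nonzero `x`, `y` give the same value of `x ^ 2 + 1 / x` exactly when
`x * y * (x + y) = 1`. Over a value attained by `n` elements lie exactly `3 * (n - 1)` solutions of
this equation (a solution with `x = y` marks a double root of `x ^ 3 - b * x + 1`), so the number
`T` of all solutions satisfies `3 * V + T = 3 * (p - 1)`.

Putting `t = -y / x` and `u = -x` turns the equation into `u ^ 3 * (t * (1 - t)) = 1`, and a cubic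
character `χ` evaluates `T = p - 2 + J(χ, χ) + J(χ⁻¹, χ⁻¹)`. The two Jacobi sums are conjugate
elements of `ℤ[μ]`, `μ` a primitive cube root of unity, of norm `p` and congruent to `-1` modulo
`3`; this forces their sum to be the `L ≡ 1 (mod 3)` with `4 * p = L ^ 2 + 27 * M ^ 2`. Inverting
`x` shows that `x + 1 / x ^ 2` takes the same values.
-/

open Finset

section QuadraticForm

variable {n p d x y z w : ℤ}

theorem mul_eq_mul_of_dvd_sub (hp : p ≠ 0) (hd : n ^ 2 < d) (hxy : n * p = x ^ 2 + d * y ^ 2)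
    (hzw : n * p = z ^ 2 + d * w ^ 2) (hdvd : p ∣ x * w - z * y) : x * w = z * y := by
  obtain ⟨k, hk⟩ := hdvd
  have brahmagupta : (n * p) ^ 2 = (x * z + d * y * w) ^ 2 + d * (x * w - z * y) ^ 2 := by
    linear_combination n * p * hxy + (x ^ 2 + d * y ^ 2) * hzw
  have hp2 : 0 < p ^ 2 := sq_pos_of_ne_zero hp
  have hk2 : d * k ^ 2 ≤ n ^ 2 := by
    refine le_of_mul_le_mul_left ?_ hp2
    rw [hk] at brahmagupta
    linarith [sq_nonneg (x * z + d * y * w)]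
  have hk0 : k = 0 := by
    by_contra hk0
    nlinarith [sq_pos_of_ne_zero hk0, sq_nonneg n]
  rw [← sub_eq_zero, hk, hk0, mul_zero]

theorem sq_eq_sq_of_mul_eq_mul (hd : 0 < d) (hxy : n = x ^ 2 + d * y ^ 2)
    (hzw : n = z ^ 2 + d * w ^ 2) (hcross : x * w = z * y) : x ^ 2 = z ^ 2 := by
  have hmul : n * (x ^ 2 - z ^ 2) = 0 := by
    linear_combination x ^ 2 * hzw - z ^ 2 * hxy + d * (x * w + z * y) * hcross
  rcases mul_eq_zero.mp hmul with hn | hxz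
  · have hx : x ^ 2 = 0 := by nlinarith [sq_nonneg x, mul_nonneg hd.le (sq_nonneg y)]
    have hz : z ^ 2 = 0 := by nlinarith [sq_nonneg z, mul_nonneg hd.le (sq_nonneg w)]
    rw [hx, hz]
  · exact sub_eq_zero.mp hxz

theorem sq_eq_sq_of_mul_prime_eq (hp : Prime p) (hd : n ^ 2 < d)
    (hxy : n * p = x ^ 2 + d * y ^ 2) (hzw : n * p = z ^ 2 + d * w ^ 2) : x ^ 2 = z ^ 2 := by
  have hd0 : 0 < d := (sq_nonneg n).trans_lt hd
  have hdvd : p ∣ (x * w - z * y) * (x * w + z * y) :=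
    ⟨n * (w ^ 2 - y ^ 2), by linear_combination y ^ 2 * hzw - w ^ 2 * hxy⟩
  rcases hp.dvd_or_dvd hdvd with h | h
  · exact sq_eq_sq_of_mul_eq_mul hd0 hxy hzw (mul_eq_mul_of_dvd_sub hp.ne_zero hd hxy hzw h)
  · have hzw' : n * p = z ^ 2 + d * (-w) ^ 2 := by rw [neg_sq, hzw]
    have h' : p ∣ x * -w - z * y := by
      rw [← dvd_neg]
      convert! h using 1
      ring
    exact sq_eq_sq_of_mul_eq_mul hd0 hxy hzw' (mul_eq_mul_of_dvd_sub hp.ne_zero hd hxy hzw' h')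

theorem eq_of_four_mul_prime_eq (hp : Prime p) (hxy : 4 * p = x ^ 2 + 27 * y ^ 2)
    (hzw : 4 * p = z ^ 2 + 27 * w ^ 2) (hx : x % 3 = 1) (hz : z % 3 = 1) : x = z := by
  have hsq : x ^ 2 = z ^ 2 := sq_eq_sq_of_mul_prime_eq hp (by norm_num) hxy hzw
  rcases sq_eq_sq_iff_eq_or_eq_neg.mp hsq with h | h <;> omega

end QuadraticForm

section RootsOfUnity

theorem exists_eq_add_mul_of_mem_adjoin_singleton {R A : Type*} [CommRing R] [CommRing A]
    [Algebra R A] {μ : A} {s t : R} (hμ : μ ^ 2 = algebraMap R A s + algebraMap R A t * μ)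
    {z : A} (hz : z ∈ Algebra.adjoin R {μ}) :
    ∃ u v : R, z = algebraMap R A u + algebraMap R A v * μ := by
  induction hz using Algebra.adjoin_induction with
  | mem x hx => exact ⟨0, 1, by simpa using hx⟩
  | algebraMap r => exact ⟨r, 0, by simp⟩
  | add x y _ _ hx hy =>
    obtain ⟨a, b, rfl⟩ := hx
    obtain ⟨c, d, rfl⟩ := hy
    exact ⟨a + c, b + d, by simp only [map_add]; ring⟩
  | mul x y _ _ hx hy =>
    obtain ⟨a, b, rfl⟩ := hx
    obtain ⟨c, d, rfl⟩ := hy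
    refine ⟨a * c + b * d * s, a * d + b * c + b * d * t, ?_⟩
    simp only [map_add, map_mul]
    linear_combination algebraMap R A b * algebraMap R A d * hμ

theorem sq_add_self_add_one_eq_zero_of_isPrimitiveRoot {R : Type*} [CommRing R] [IsDomain R]
    {μ : R} (hμ : IsPrimitiveRoot μ 3) : μ ^ 2 + μ + 1 = 0 := by
  have hsum := hμ.geom_sum_eq_zero (by norm_num)
  simp only [sum_range_succ, sum_range_zero] at hsum
  linear_combination hsum

theorem mulChar_apply_coe_eq_one_iff {M R : Type*} [CommMonoid M] [IsCyclic Mˣ]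
    [CommMonoidWithZero R] (χ : MulChar M R) (a : Mˣ) :
    χ a = 1 ↔ ∃ u : Mˣ, u ^ orderOf χ = a := by
  obtain ⟨g, hg⟩ := IsCyclic.exists_generator (α := Mˣ)
  have horder : orderOf (χ.toUnitHom g) = orderOf χ := by
    refine orderOf_eq_orderOf_iff.mpr fun n ↦ ?_
    rw [MulChar.eq_iff hg, MulChar.pow_apply_coe, MulChar.one_apply_coe, Units.ext_iff,
      Units.val_pow_eq_pow_val, MulChar.coe_toUnitHom, Units.val_one]
  constructor
  · intro ha
    obtain ⟨k, rfl⟩ := Subgroup.mem_zpowers_iff.mp (hg a)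
    have hk : χ.toUnitHom g ^ k = 1 := by
      rw [← map_zpow, Units.ext_iff, MulChar.coe_toUnitHom, ha, Units.val_one]
    obtain ⟨j, rfl⟩ := horder ▸ orderOf_dvd_iff_zpow_eq_one.mpr hk
    exact ⟨g ^ j, by rw [← zpow_natCast, ← zpow_mul, mul_comm]⟩
  · rintro ⟨u, rfl⟩
    rw [Units.val_pow_eq_pow_val, map_pow, ← MulChar.pow_apply_coe, pow_orderOf_eq_one,
      MulChar.one_apply_coe]

end RootsOfUnity

section Cubic

variable {K : Type*} [Field K] {b c u v x y : K}

theorem sq_add_div_eq_iff (hx : x ≠ 0) : x ^ 2 + c / x = b ↔ x ^ 3 + c = b * x := by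
  rw [← mul_left_inj' hx]
  field_simp

theorem ne_zero_of_mul_mul_add_eq (hc : c ≠ 0) (huv : u * v * (u + v) = c) : u ≠ 0 := by
  rintro rfl
  exact hc (by simpa using huv.symm)

theorem mul_mul_add_eq_of_ne (hxy : x ≠ y) (hx : x ^ 3 + c = b * x) (hy : y ^ 3 + c = b * y) :
    x * y * (x + y) = c := by
  refine sub_eq_zero.mp (mul_left_cancel₀ (sub_ne_zero.mpr hxy) ?_)
  linear_combination y * hx - x * hy

theorem cube_add_eq_mul_iff (hc : c ≠ 0) (huv : u * v * (u + v) = c) (hu : u ^ 3 + c = b * u) :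
    x ^ 3 + c = b * x ↔ x = u ∨ x = v ∨ x = -(u + v) := by
  have hb : b = u ^ 2 + u * v + v ^ 2 :=
    mul_right_cancel₀ (ne_zero_of_mul_mul_add_eq hc huv) (by linear_combination -hu - huv)
  have hfactor : x ^ 3 + c - b * x = (x - u) * ((x - v) * (x + (u + v))) := by
    rw [hb]
    linear_combination -huv
  rw [← sub_eq_zero, hfactor, mul_eq_zero, mul_eq_zero, sub_eq_zero, sub_eq_zero,
    add_eq_zero_iff_eq_neg]

theorem mul_mul_add_eq_iff (hc : c ≠ 0) (huv : u * v * (u + v) = c) :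
    u * x * (u + x) = c ↔ x = v ∨ x = -(u + v) := by
  have hfactor : u * x * (u + x) - c = u * ((x - v) * (x + (u + v))) := by
    linear_combination huv
  rw [← sub_eq_zero, hfactor, mul_eq_zero_iff_left (ne_zero_of_mul_mul_add_eq hc huv), mul_eq_zero,
    sub_eq_zero, add_eq_zero_iff_eq_neg]

end Cubic

theorem three_mul_card_triple_eq_card_pairs_add_three {α : Type*} [DecidableEq α] {a b c : α}
    (h : ¬(a = b ∧ b = c)) :
    3 * #{a, b, c} = #{(a, b), (a, c), (b, a), (b, c), (c, a), (c, b)} + 3 := by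
  by_cases hab : a = b <;> by_cases hbc : b = c <;> by_cases hac : a = c <;> grind

section FiniteField

variable {F : Type*} [Field F]

theorem exists_pow_orderOf_eq_inv_iff [Finite F] {R : Type*} [CommRing R]
    (χ : MulChar F R) (a : Fˣ) :
    (∃ u : F, u ^ orderOf χ = (a : F)⁻¹) ↔ χ a = 1 := by
  rw [mulChar_apply_coe_eq_one_iff]
  constructor
  · rintro ⟨u, hu⟩
    have hu0 : u ≠ 0 := by
      rintro rfl
      exact inv_ne_zero a.ne_zero (hu ▸ zero_pow χ.orderOf_pos.ne')
    exact ⟨(Units.mk0 u hu0)⁻¹, by ext; simp [hu]⟩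
  · rintro ⟨u, rfl⟩
    exact ⟨(u : F)⁻¹, by simp⟩

variable [Fintype F]

theorem natCast_ne_zero_of_dvd_card_sub_one {n : ℕ} (h : n ∣ Fintype.card F - 1) :
    (n : F) ≠ 0 := by
  intro hn
  obtain ⟨m, hm⟩ := h
  have hcard : Fintype.card F = n * m + 1 := by
    have := Fintype.card_pos (α := F)
    omega
  simpa [hn, FiniteField.cast_card_eq_zero] using congrArg (Nat.cast (R := F)) hcard

theorem exists_isPrimitiveRoot_of_dvd_card_sub_one {n : ℕ} (h : n ∣ Fintype.card F - 1) :
    ∃ ζ : F, IsPrimitiveRoot ζ n := by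
  classical
  obtain ⟨g, hg⟩ := IsCyclic.exists_ofOrder_eq_natCard (α := Fˣ)
  rw [Nat.card_eq_fintype_card, Fintype.card_units] at hg
  obtain ⟨m, hm⟩ := h
  have hζ : IsPrimitiveRoot (g ^ m) n :=
    (hg ▸ IsPrimitiveRoot.orderOf g).pow (Nat.sub_pos_of_lt Fintype.one_lt_card)
      (by rw [hm, mul_comm])
  exact ⟨_, IsPrimitiveRoot.coe_units_iff.mpr hζ⟩

theorem jacobiSum_inv_inv_eq_star (χ ψ : MulChar F ℂ) :
    jacobiSum χ⁻¹ ψ⁻¹ = star (jacobiSum χ ψ) := by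
  rw [← MulChar.star_eq_inv, ← MulChar.star_eq_inv]
  exact jacobiSum_ringHomComp χ ψ (starRingEnd ℂ)

theorem exists_jacobiSum_eq_of_pow_three_eq_one {R : Type*} [CommRing R] [IsDomain R]
    {χ ψ : MulChar F R} (hχ : χ ^ 3 = 1) (hψ : ψ ^ 3 = 1) (hF : 3 ∣ Fintype.card F - 1) {μ : R}
    (hμ : IsPrimitiveRoot μ 3) :
    ∃ a b : ℤ, jacobiSum χ ψ = (3 * a - 1) + 3 * b * μ := by
  have hμ2 := sq_add_self_add_one_eq_zero_of_isPrimitiveRoot hμ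
  obtain ⟨z, hz, hJ⟩ := exists_jacobiSum_eq_neg_one_add (by norm_num) hχ hψ hF hμ
  obtain ⟨u, v, rfl⟩ := exists_eq_add_mul_of_mem_adjoin_singleton (s := -1) (t := -1)
    (by simp only [algebraMap_int_eq, eq_intCast]; push_cast; linear_combination hμ2) hz
  refine ⟨v, v - u, ?_⟩
  simp only [algebraMap_int_eq, eq_intCast] at hJ
  push_cast
  linear_combination hJ + (u + v * μ - 3 * v : R) * hμ2

theorem exists_four_mul_card_eq_and_jacobiSum_add_eq {χ : MulChar F ℂ} (hχ : orderOf χ = 3) :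
    ∃ L M : ℤ, 4 * (Fintype.card F : ℤ) = L ^ 2 + 27 * M ^ 2 ∧ L % 3 = 1 ∧
      jacobiSum χ χ + jacobiSum χ⁻¹ χ⁻¹ = L := by
  have hχ3 : χ ^ 3 = 1 := orderOf_dvd_iff_pow_eq_one.mp hχ.dvd
  have hχ1 : χ ≠ 1 := fun h ↦ by simp [h] at hχ
  have hχ2 : χ * χ ≠ 1 := by
    rw [← sq, ne_eq, ← orderOf_dvd_iff_pow_eq_one, hχ]
    norm_num
  have hchar : ringChar ℂ ≠ ringChar F := by
    rw [ringChar.eq_zero]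
    exact (CharP.ringChar_ne_zero_of_finite F).symm
  obtain ⟨μ, hμ⟩ : ∃ μ : ℂ, IsPrimitiveRoot μ 3 :=
    ⟨_, Complex.isPrimitiveRoot_exp 3 (by norm_num)⟩
  have hμ3 := hμ.pow_eq_one
  have hμ2 := sq_add_self_add_one_eq_zero_of_isPrimitiveRoot hμ
  have hconj : star μ = μ ^ 2 := by
    rw [Complex.star_def, ← Complex.inv_eq_conj (hμ.norm'_eq_one (by norm_num))]
    exact inv_eq_of_mul_eq_one_right (by rw [← pow_succ', hμ3])
  obtain ⟨a, b, hJ⟩ :=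
    exists_jacobiSum_eq_of_pow_three_eq_one hχ3 hχ3 (hχ ▸ χ.orderOf_dvd_card_sub_one) hμ
  have hJinv : jacobiSum χ⁻¹ χ⁻¹ = (3 * a - 1) + 3 * b * μ ^ 2 := by
    rw [jacobiSum_inv_inv_eq_star, hJ, ← hconj]
    simp
  have hnorm := jacobiSum_mul_jacobiSum_inv hchar hχ1 hχ1 hχ2
  rw [hJ, hJinv] at hnorm
  refine ⟨2 * (3 * a - 1) - 3 * b, b, ?_, by omega, ?_⟩
  · have : (4 * Fintype.card F : ℂ) = (2 * (3 * a - 1) - 3 * b) ^ 2 + 27 * b ^ 2 := by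
      rw [← hnorm]
      linear_combination (4 * (3 * a - 1) * (3 * b) : ℂ) * hμ2 + 4 * (3 * b) ^ 2 * hμ3
    exact_mod_cast this
  · rw [hJ, hJinv]
    push_cast
    linear_combination (3 * b : ℂ) * hμ2

variable [DecidableEq F]

theorem card_filter_pow_eq {n : ℕ} (hn : n ∣ Fintype.card F - 1) {b : F} (hb : b ≠ 0)
    (h : ∃ u, u ^ n = b) : #{u : F | u ^ n = b} = n := by
  obtain ⟨ζ, hζ⟩ := exists_isPrimitiveRoot_of_dvd_card_sub_one hn
  have hn0 : 0 < n := Nat.pos_of_dvd_of_pos hn (Nat.sub_pos_of_lt Fintype.one_lt_card)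
  have hroots : ({u : F | u ^ n = b} : Finset F) = (Polynomial.nthRoots n b).toFinset := by
    ext u
    simp [Polynomial.mem_nthRoots hn0]
  rw [hroots, Multiset.toFinset_card_of_nodup (hζ.nthRoots_nodup hb), hζ.card_nthRoots, if_pos h]

theorem card_filter_pow_mul_eq_one {R : Type*} [CommRing R] [IsDomain R] (χ : MulChar F R)
    (a : F) : (#{u : F | u ^ orderOf χ * a = 1} : R) = ∑ i ∈ range (orderOf χ), (χ ^ i) a := by
  rcases eq_or_ne a 0 with rfl | ha
  · simp [MulChar.map_zero]
  lift a to Fˣ using ha.isUnit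
  have hpow := exists_pow_orderOf_eq_inv_iff χ a
  simp only [mul_eq_one_iff_eq_inv₀ ha, MulChar.pow_apply_coe]
  by_cases hχa : χ a = 1
  · rw [card_filter_pow_eq χ.orderOf_dvd_card_sub_one (inv_ne_zero ha) (hpow.mpr hχa)]
    simp [hχa]
  · have hroot : χ a ^ orderOf χ = 1 := by
      rw [← MulChar.pow_apply_coe, pow_orderOf_eq_one, MulChar.one_apply_coe]
    have hsum : ∑ i ∈ range (orderOf χ), χ a ^ i = 0 := by
      have hgeom := geom_sum_mul (χ a) (orderOf χ)
      rw [hroot, sub_self] at hgeom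
      exact (mul_eq_zero.mp hgeom).resolve_right (sub_ne_zero.mpr hχa)
    rw [hsum, filter_false_of_mem fun u _ hu ↦ hχa (hpow.mp ⟨u, hu⟩), card_empty, Nat.cast_zero]

/-- The set of values of `x ↦ x ^ 2 + c / x` on the nonzero elements of `F`; its cardinality over
`ZMod p` is `V_p(x² + c/x)`. -/
def sqAddDivValues (c : F) : Finset F :=
  ({x | x ≠ 0} : Finset F).image fun x ↦ x ^ 2 + c / x

/-- The pairs `(x, y)` with `x * y * (x + y) = c`. For `c ≠ 0` they are the pairs of distinct
nonzero elements on which `x ↦ x ^ 2 + c / x` takes equal values, together with the diagonal pairs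
at the double roots `2 * x ^ 3 = c`. -/
def collisionPairs (c : F) : Finset (F × F) :=
  {q | q.1 * q.2 * (q.1 + q.2) = c}

theorem mem_sqAddDivValues {b c : F} : b ∈ sqAddDivValues c ↔ ∃ x ≠ 0, x ^ 3 + c = b * x := by
  simp only [sqAddDivValues, mem_image, mem_filter, mem_univ, true_and]
  exact exists_congr fun x ↦ and_congr_right sq_add_div_eq_iff

theorem mem_sqAddDivValues_iff_inv {b c : F} :
    b ∈ sqAddDivValues c ↔ ∃ x ≠ 0, c * x ^ 3 + 1 = b * x ^ 2 := by
  rw [mem_sqAddDivValues, inv_surjective.exists]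
  refine exists_congr fun x ↦ ?_
  rw [ne_eq, inv_eq_zero]
  refine and_congr_right fun hx ↦ ?_
  field_simp
  rw [add_comm]

theorem mem_collisionPairs {c : F} {q : F × F} :
    q ∈ collisionPairs c ↔ q.1 * q.2 * (q.1 + q.2) = c := by
  simp only [collisionPairs, mem_filter, mem_univ, true_and]

theorem fst_ne_zero_of_mem_collisionPairs {c : F} (hc : c ≠ 0) {q : F × F}
    (hq : q ∈ collisionPairs c) : q.1 ≠ 0 :=
  ne_zero_of_mul_mul_add_eq hc (mem_collisionPairs.mp hq)

theorem card_collisionPairs_eq_sum {c : F} (hc : c ≠ 0) :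
    #(collisionPairs c) = ∑ t : F, #{u : F | u ^ 3 * (t * (1 - t) / c) = 1} := by
  rw [← card_sigma]
  refine card_bij' (fun q _ ↦ ⟨-q.2 / q.1, -q.1⟩) (fun s _ ↦ (-s.2, s.1 * s.2)) ?_ ?_ ?_ ?_
  · rintro ⟨x, y⟩ hq
    have hx : x ≠ 0 := fst_ne_zero_of_mem_collisionPairs hc hq
    rw [mem_collisionPairs] at hq
    simp only [mem_sigma, mem_univ, mem_filter, true_and]
    field_simp
    linear_combination hq
  · rintro ⟨t, u⟩ hs
    simp only [mem_sigma, mem_univ, mem_filter, true_and] at hs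
    rw [mem_collisionPairs]
    field_simp at hs
    linear_combination hs
  · rintro ⟨x, y⟩ hq
    have hx : x ≠ 0 := fst_ne_zero_of_mem_collisionPairs hc hq
    ext
    · simp
    · field_simp
  · rintro ⟨t, u⟩ hs
    have hu : u ≠ 0 := by
      rintro rfl
      simp at hs
    simp [neg_div_neg_eq, hu]

theorem card_collisionPairs {R : Type*} [CommRing R] [IsDomain R] {χ : MulChar F R}
    (hχ : orderOf χ = 3) {c : F} (hc : c ≠ 0) :
    (#(collisionPairs c) : R) = Fintype.card F - 2 +
      (χ⁻¹ c * jacobiSum χ χ + χ c * jacobiSum χ⁻¹ χ⁻¹) := by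
  have hsq : χ ^ 2 = χ⁻¹ := eq_inv_of_mul_eq_one_left (orderOf_dvd_iff_pow_eq_one.mp hχ.dvd)
  have hone : (1 : MulChar F R) c⁻¹ = 1 := MulChar.one_apply (inv_ne_zero hc).isUnit
  have hcount (a : F) : (#{u : F | u ^ 3 * a = 1} : R) = (1 : MulChar F R) a + χ a + χ⁻¹ a := by
    simpa [hχ, sum_range_succ, hsq] using card_filter_pow_mul_eq_one χ a
  rw [card_collisionPairs_eq_sum hc, Nat.cast_sum, ← jacobiSum_one_one]
  simp only [hcount, div_eq_mul_inv, map_mul, hone, sum_add_distrib, ← sum_mul, jacobiSum,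
    MulChar.inv_apply', inv_inv]
  ring

theorem filter_collisionPairs_eq {b c u v : F} (hc : c ≠ 0) (huv : u * v * (u + v) = c)
    (hu : u ^ 3 + c = b * u) : {q ∈ collisionPairs c | q.1 ^ 3 + c = b * q.1} =
      {(u, v), (u, -(u + v)), (v, u), (v, -(u + v)), (-(u + v), u), (-(u + v), v)} := by
  have hvu : v * u * (v + u) = c := by linear_combination huv
  have hwu : -(u + v) * u * (-(u + v) + u) = c := by linear_combination huv
  have hwuv : -(-(u + v) + u) = v := by ring
  have pairs_over {x y s t : F} (hxy : x * y * (x + y) = c) :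
      s = x ∧ s * t * (s + t) = c ↔ s = x ∧ t = y ∨ s = x ∧ t = -(x + y) := by
    rw [← and_or_left]
    refine and_congr_right fun hs ↦ ?_
    rw [hs, mul_mul_add_eq_iff hc hxy]
  ext ⟨s, t⟩
  simp only [mem_filter, mem_collisionPairs, cube_add_eq_mul_iff hc huv hu, mem_insert,
    mem_singleton, Prod.mk.injEq]
  rw [and_comm, or_and_right, or_and_right, pairs_over huv, pairs_over hvu, pairs_over hwu,
    add_comm v u, hwuv]
  simp only [or_assoc]

theorem three_mul_card_roots {b c : F} (h3 : (3 : F) ≠ 0) (hc : c ≠ 0)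
    (hb : ∃ x, x ^ 3 + c = b * x) :
    3 * #{x : F | x ^ 3 + c = b * x} =
      #{q ∈ collisionPairs c | q.1 ^ 3 + c = b * q.1} + 3 := by
  by_cases hsplit : ∃ u v : F, u * v * (u + v) = c ∧ u ^ 3 + c = b * u
  · obtain ⟨u, v, huv, hu⟩ := hsplit
    have hroots : ({x : F | x ^ 3 + c = b * x} : Finset F) = {u, v, -(u + v)} := by
      ext x
      simp only [mem_filter, mem_univ, true_and, cube_add_eq_mul_iff hc huv hu, mem_insert,
        mem_singleton]
    have not_triple_root : ¬(u = v ∧ v = -(u + v)) := by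
      rintro ⟨rfl, hu'⟩
      have h3u : 3 * u = 0 := by linear_combination hu'
      exact mul_ne_zero h3 (ne_zero_of_mul_mul_add_eq hc huv) h3u
    rw [hroots, filter_collisionPairs_eq hc huv hu,
      three_mul_card_triple_eq_card_pairs_add_three not_triple_root]
  · obtain ⟨x, hx⟩ := hb
    have hroots : ({x : F | x ^ 3 + c = b * x} : Finset F) = {x} := by
      refine eq_singleton_iff_unique_mem.mpr ⟨by simpa using hx, fun y hy ↦ ?_⟩
      have hy : y ^ 3 + c = b * y := by simpa using hy
      by_contra hyx
      exact hsplit ⟨y, x, mul_mul_add_eq_of_ne hyx hy hx, hy⟩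
    have hpairs : ({q ∈ collisionPairs c | q.1 ^ 3 + c = b * q.1} : Finset (F × F)) = ∅ :=
      filter_false_of_mem fun q hq hroot ↦ hsplit ⟨q.1, q.2, mem_collisionPairs.mp hq, hroot⟩
    rw [hroots, hpairs, card_singleton, card_empty]

theorem sum_card_roots {c : F} (hc : c ≠ 0) :
    ∑ b ∈ sqAddDivValues c, #{x : F | x ^ 3 + c = b * x} = Fintype.card F - 1 := by
  rw [← card_univ, ← card_erase_of_mem (mem_univ (0 : F)), ← filter_ne',
    card_eq_sum_card_image (fun x ↦ x ^ 2 + c / x)]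
  refine sum_congr rfl fun b _ ↦ congrArg card ?_
  ext x
  simp only [mem_filter, mem_univ, true_and]
  constructor
  · intro hx
    have hx0 : x ≠ 0 := by
      rintro rfl
      exact hc (by simpa using hx)
    exact ⟨hx0, (sq_add_div_eq_iff hx0).mpr hx⟩
  · exact fun ⟨hx0, hx⟩ ↦ (sq_add_div_eq_iff hx0).mp hx

theorem sum_card_filter_collisionPairs {c : F} (hc : c ≠ 0) :
    ∑ b ∈ sqAddDivValues c, #{q ∈ collisionPairs c | q.1 ^ 3 + c = b * q.1} =
      #(collisionPairs c) := by
  have hmaps : ∀ q ∈ collisionPairs c, q.1 ^ 2 + c / q.1 ∈ sqAddDivValues c := fun q hq ↦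
    mem_image_of_mem _ (mem_filter.mpr ⟨mem_univ _, fst_ne_zero_of_mem_collisionPairs hc hq⟩)
  rw [card_eq_sum_card_fiberwise hmaps]
  refine sum_congr rfl fun b _ ↦ congrArg card (filter_congr fun q hq ↦ ?_)
  exact (sq_add_div_eq_iff (fst_ne_zero_of_mem_collisionPairs hc hq)).symm

theorem three_mul_card_sqAddDivValues_add {c : F} (h3 : (3 : F) ≠ 0) (hc : c ≠ 0) :
    3 * #(sqAddDivValues c) + #(collisionPairs c) = 3 * (Fintype.card F - 1) := by
  have hfiber : ∀ b ∈ sqAddDivValues c, 3 * #{x : F | x ^ 3 + c = b * x} =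
      #{q ∈ collisionPairs c | q.1 ^ 3 + c = b * q.1} + 3 := fun b hb ↦
    three_mul_card_roots h3 hc ((mem_sqAddDivValues.mp hb).imp fun _ ↦ And.right)
  rw [← sum_card_roots hc, mul_sum, sum_congr rfl hfiber, sum_add_distrib,
    sum_card_filter_collisionPairs hc, sum_const, smul_eq_mul]
  ring

theorem three_mul_card_sqAddDivValues {R : Type*} [CommRing R] [IsDomain R] {χ : MulChar F R}
    (hχ : orderOf χ = 3) {c : F} (hc : c ≠ 0) :
    (3 * #(sqAddDivValues c) : R) = 2 * Fintype.card F - 1 -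
      (χ⁻¹ c * jacobiSum χ χ + χ c * jacobiSum χ⁻¹ χ⁻¹) := by
  have h3 : (3 : F) ≠ 0 := by
    exact_mod_cast natCast_ne_zero_of_dvd_card_sub_one (hχ ▸ χ.orderOf_dvd_card_sub_one)
  have hcount := congrArg (Nat.cast (R := R)) (three_mul_card_sqAddDivValues_add h3 hc)
  push_cast [Nat.cast_sub Fintype.card_pos, card_collisionPairs hχ hc] at hcount
  linear_combination hcount

end FiniteField

section ZMod

variable {n : ℕ} [NeZero n]

theorem card_filter_range_natCast (P : ZMod n → Prop) [DecidablePred P] :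
    #{b ∈ range n | P (b : ℕ)} = #{b : ZMod n | P b} := by
  refine card_bij' (fun b _ ↦ (b : ZMod n)) (fun b _ ↦ b.val) ?_ ?_ ?_ ?_
  · simp +contextual
  · simp +contextual [ZMod.val_lt]
  · simp +contextual [Nat.mod_eq_of_lt]
  · simp

theorem exists_mem_Icc_natCast_iff (P : ZMod n → Prop) :
    (∃ x ∈ Icc 1 (n - 1), P (x : ℕ)) ↔ ∃ x ≠ 0, P x := by
  constructor
  · rintro ⟨x, hx, hP⟩
    rw [mem_Icc] at hx
    refine ⟨x, fun h0 ↦ ?_, hP⟩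
    have := Nat.le_of_dvd hx.1 ((ZMod.natCast_eq_zero_iff x n).mp h0)
    omega
  · rintro ⟨x, hx, hP⟩
    have hval : x.val ≠ 0 := (ZMod.val_ne_zero x).mpr hx
    have hlt := x.val_lt
    exact ⟨x.val, by rw [mem_Icc]; omega, by simpa using hP⟩

theorem card_filter_exists_modEq (k e : ℕ) (c : ℤ) :
    #{b ∈ range n | ∃ x ∈ Icc 1 (n - 1), (x : ℤ) ^ k + c ≡ (b : ℕ) * (x : ℤ) ^ e [ZMOD n]} =
      #{b : ZMod n | ∃ x ≠ 0, x ^ k + c = b * x ^ e} := by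
  rw [← card_filter_range_natCast]
  refine congrArg card (filter_congr fun b _ ↦ ?_)
  rw [← exists_mem_Icc_natCast_iff]
  simp only [← ZMod.intCast_eq_intCast_iff]
  push_cast
  rfl

end ZMod

theorem stmt_6 (p : ℕ) (hp : p.Prime) (hp1 : p % 3 = 1)
    (L M : ℤ) (hpLM : 4 * (p : ℤ) = L ^ 2 + 27 * M ^ 2) (hL : L % 3 = 1) :
    L = 2 * (p : ℤ) - 1 - 3 * (((Finset.range p).filter (fun b : ℕ =>
      ∃ x ∈ Finset.Icc 1 (p - 1),
        (x : ℤ) ^ 3 + (1) ≡ (b : ℤ) * (x : ℤ) [ZMOD (p : ℤ)])).card : ℤ) ∧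
    L = 2 * (p : ℤ) - 1 - 3 * (((Finset.range p).filter (fun b : ℕ =>
      ∃ x ∈ Finset.Icc 1 (p - 1),
        (x : ℤ) ^ 3 + (1) ≡ (b : ℤ) * (x : ℤ) ^ 2 [ZMOD (p : ℤ)])).card : ℤ) := by
  have : Fact p.Prime := ⟨hp⟩
  obtain ⟨χ, hχ⟩ := MulChar.exists_mulChar_orderOf (ZMod p) (by rw [ZMod.card]; omega)
    (Complex.isPrimitiveRoot_exp 3 (by norm_num))
  obtain ⟨L', M', hpLM', hL', hJ⟩ := exists_four_mul_card_eq_and_jacobiSum_add_eq hχ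
  rw [ZMod.card] at hpLM'
  have hLL' : L = L' :=
    eq_of_four_mul_prime_eq (Nat.prime_iff_prime_int.mp hp) hpLM hpLM' hL hL'
  have hV : 3 * (#(sqAddDivValues (1 : ZMod p)) : ℤ) = 2 * p - 1 - L := by
    have hcount := three_mul_card_sqAddDivValues hχ (one_ne_zero (α := ZMod p))
    rw [map_one, map_one, one_mul, one_mul, hJ, ZMod.card, ← hLL'] at hcount
    exact_mod_cast hcount
  have hV₁ := card_filter_exists_modEq (n := p) 3 1 1
  have hV₂ := card_filter_exists_modEq (n := p) 3 2 1
  simp only [pow_one, Int.cast_one, ← mem_sqAddDivValues, filter_univ_mem] at hV₁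
  have mem_iff_inv (b : ZMod p) : b ∈ sqAddDivValues 1 ↔ ∃ x ≠ 0, x ^ 3 + 1 = b * x ^ 2 := by
    simpa only [one_mul] using mem_sqAddDivValues_iff_inv (b := b) (c := 1)
  simp only [Int.cast_one, ← mem_iff_inv, filter_univ_mem] at hV₂
  constructor
  · rw [hV₁]; linarith
  · rw [hV₂]; linarith
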